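/- arXiv:1701.08791 — 6 statements merged into one kernel-verified Lean document; each statement's English description precedes it below -/
import Mathlib

section
/- For all real numbers x ≥ 0, y ≥ 0 and 𝖨 ≥ 0, the following two integral representations of the channel kernel coincide: ∫_{−π}^{π} exp(−(y + x + 𝖨 − 2√(yx)·cos θ)) · I₀(2·√(𝖨·(y + x − 2√(yx)·cos θ))) dθ = ∫_{−π}^{π} exp(−(y + x + 𝖨 + 2√(x𝖨)·cos θ)) · I₀(2·√(y·(x + 𝖨 + 2√(x𝖨)·cos θ))) dθ. -/
/-!
Put `g z = exp (-‖z‖²)`. By the law of cosines, the average of `g` over the circle of centre `w` and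
radius `r` is `exp (-(‖w‖² + r²)) I₀(2 r ‖w‖)`. Hence both sides of the identity are `2π` times an
iterated circle average of `g`, that is, an average of `exp (-‖√x - √y e^{iθ} + √I e^{iφ}‖²)` over
the two phases, and they differ only in the order in which the phases are averaged.
-/

open MeasureTheory Real Filter Topology

noncomputable def besselI0 (r : ℝ) : ℝ :=
  (1 / (2 * π)) * ∫ t in (0:ℝ)..(2 * π), Real.exp (r * Real.cos t)

noncomputable def K (I x y : ℝ) : ℝ :=
  (1 / (2 * π)) * ∫ θ in (-π)..π,
    Real.exp (-(y + x + I - 2 * Real.sqrt (y * x) * Real.cos θ)) *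
      besselI0 (2 * Real.sqrt (I * (y + x - 2 * Real.sqrt (y * x) * Real.cos θ)))

noncomputable def outDen (I : ℝ) (F : Measure ℝ) (y : ℝ) : ℝ :=
  ∫ x, K I x y ∂F

noncomputable def outEnt (I : ℝ) (F : Measure ℝ) : ℝ :=
  -∫ y in Set.Ioi (0:ℝ), outDen I F y * Real.log (outDen I F y)

noncomputable def margEnt (I : ℝ) (F : Measure ℝ) (x : ℝ) : ℝ :=
  -∫ y in Set.Ioi (0:ℝ), K I x y * Real.log (outDen I F y)


section NormedSpace

variable {E : Type*} [NormedAddCommGroup E] [NormedSpace ℝ E]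

lemma intervalIntegral_comm_of_continuous {F : ℝ → ℝ → E} (hF : Continuous (Function.uncurry F))
    (a b c d : ℝ) :
    ∫ x in a..b, ∫ y in c..d, F x y = ∫ y in c..d, ∫ x in a..b, F x y :=
  intervalIntegral_intervalIntegral_swap <|
    (hF.continuousOn.integrableOn_compact (isCompact_uIcc.prod isCompact_uIcc)).mono_set
      (Set.prod_mono Set.uIoc_subset_uIcc Set.uIoc_subset_uIcc)

lemma circleAverage_eq_integral_neg_pi_pi (f : ℂ → E) (c : ℂ) (R : ℝ) :
    circleAverage f c R = (2 * π)⁻¹ • ∫ θ in (-π)..π, f (circleMap c R θ) := by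
  have hper : Function.Periodic (fun θ ↦ f (circleMap c R θ)) (2 * π) :=
    (periodic_circleMap c R).comp f
  have hshift := hper.intervalIntegral_add_eq 0 (-π)
  rw [zero_add, show -π + 2 * π = π by ring] at hshift
  rw [circleAverage_def, hshift]

lemma circleAverage_circleAverage_comm {f : ℂ → E} (hf : Continuous f) (c : ℂ) (r s : ℝ) :
    circleAverage (fun z ↦ circleAverage f z s) c r =
      circleAverage (fun z ↦ circleAverage f z r) c s := by
  have hcont : Continuous (Function.uncurry fun θ φ ↦ f (circleMap (circleMap c r θ) s φ)) := by
    simp only [circleMap, Function.uncurry_def]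
    fun_prop
  have hswap : ∀ θ φ, circleMap (circleMap c r θ) s φ = circleMap (circleMap c s φ) r θ :=
    fun θ φ ↦ add_right_comm _ _ _
  simp only [circleAverage_def, intervalIntegral.integral_smul]
  rw [intervalIntegral_comm_of_continuous hcont]
  simp only [hswap]

end NormedSpace

lemma norm_circleMap_sq (c : ℂ) (R θ : ℝ) :
    ‖circleMap c R θ‖ ^ 2 = ‖c‖ ^ 2 + R ^ 2 + 2 * ‖c‖ * R * cos (θ - c.arg) := by
  have hinner : inner ℝ c (circleMap 0 R θ) = ‖c‖ * R * cos (θ - c.arg) := by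
    rw [Complex.inner, Complex.mul_re, Complex.conj_re, Complex.conj_im, circleMap_zero_re,
      circleMap_zero_im, ← Complex.norm_mul_cos_arg c, ← Complex.norm_mul_sin_arg c, cos_sub]
    ring
  rw [← add_sub_cancel c (circleMap c R θ), circleMap_sub_center, norm_add_sq_real, hinner,
    norm_circleMap_zero, sq_abs]
  ring

lemma circleAverage_exp_neg_norm_sq (c : ℂ) (R : ℝ) :
    circleAverage (fun z ↦ exp (-‖z‖ ^ 2)) c R =
      exp (-(‖c‖ ^ 2 + R ^ 2)) * besselI0 (2 * R * ‖c‖) := by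
  have hopposite (θ : ℝ) : exp (-‖circleMap c R (θ + (c.arg + π))‖ ^ 2) =
      exp (-(‖c‖ ^ 2 + R ^ 2)) * exp (2 * R * ‖c‖ * cos θ) := by
    rw [norm_circleMap_sq, ← exp_add, show θ + (c.arg + π) - c.arg = θ + π by ring, cos_add_pi]
    ring_nf
  rw [circleAverage_eq_integral_add (c.arg + π)]
  simp only [hopposite, intervalIntegral.integral_const_mul, smul_eq_mul, besselI0]
  ring

lemma integral_exp_mul_besselI0_eq_circleAverage {a s : ℝ} (ha : 0 ≤ a) (hs : 0 ≤ s) (r : ℝ) :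
    ∫ θ in (-π)..π, exp (-(a ^ 2 + r ^ 2 + s ^ 2 + 2 * (a * r) * cos θ)) *
        besselI0 (2 * √(s ^ 2 * (a ^ 2 + r ^ 2 + 2 * (a * r) * cos θ))) =
      2 * π * circleAverage (fun z ↦ circleAverage (fun w ↦ exp (-‖w‖ ^ 2)) z s) a r := by
  have hnorm (θ : ℝ) : ‖circleMap a r θ‖ ^ 2 = a ^ 2 + r ^ 2 + 2 * (a * r) * cos θ := by
    rw [norm_circleMap_sq, Complex.arg_ofReal_of_nonneg ha, Complex.norm_of_nonneg ha, sub_zero]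
    ring
  rw [circleAverage_eq_integral_neg_pi_pi, smul_eq_mul, mul_inv_cancel_left₀ two_pi_pos.ne']
  refine intervalIntegral.integral_congr fun θ _ ↦ ?_
  simp only [circleAverage_exp_neg_norm_sq]
  rw [← hnorm, ← mul_pow, sqrt_sq (by positivity), hnorm]
  ring_nf

theorem stmt_1 (x y I : ℝ) (hx : 0 ≤ x) (hy : 0 ≤ y) (hI : 0 ≤ I) :
    (∫ θ in (-π)..π,
        Real.exp (-(y + x + I - 2 * Real.sqrt (y * x) * Real.cos θ)) *
          besselI0 (2 * Real.sqrt (I * (y + x - 2 * Real.sqrt (y * x) * Real.cos θ))))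
    = ∫ θ in (-π)..π,
        Real.exp (-(y + x + I + 2 * Real.sqrt (x * I) * Real.cos θ)) *
          besselI0 (2 * Real.sqrt (y * (x + I + 2 * Real.sqrt (x * I) * Real.cos θ))) := by
  have hg : Continuous fun w : ℂ ↦ exp (-‖w‖ ^ 2) := by fun_prop
  calc
    _ = 2 * π * circleAverage (fun z ↦ circleAverage (fun w ↦ exp (-‖w‖ ^ 2)) z √I) √x (-√y) := by
      rw [← integral_exp_mul_besselI0_eq_circleAverage (sqrt_nonneg x) (sqrt_nonneg I), neg_sq,
        sq_sqrt hx, sq_sqrt hy, sq_sqrt hI, sqrt_mul hy]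
      ring_nf
    _ = 2 * π * circleAverage (fun z ↦ circleAverage (fun w ↦ exp (-‖w‖ ^ 2)) z √y) √x √I := by
      rw [circleAverage_neg_radius, circleAverage_circleAverage_comm hg]
    _ = _ := by
      rw [← integral_exp_mul_besselI0_eq_circleAverage (sqrt_nonneg x) (sqrt_nonneg y),
        sq_sqrt hx, sq_sqrt hy, sq_sqrt hI, sqrt_mul hx]
      ring_nf
end

section
/- Let F be a probability measure on [0,∞) with ∫₀^∞ x dF(x) ≤ 𝖲, and set β_F := −ln( ∫₀^∞ e^{−x} dF(x) ). Then the output density f(y;F) := ∫₀^∞ K(x,y) dF(x) satisfies e^{−(y + 𝖨 + β_F)} ≤ f(y;F) ≤ 1 for all y ≥ 0. -/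
/-!
Put `ρ² = y + x - 2√(yx) cos θ`, the squared distance between `√y` and `√x · exp (iθ)`. Then `K` is
the average over the circle of `exp (-(ρ² + I)) I₀(2√I ρ)`, and everything follows from
`1 ≤ I₀(r) ≤ exp |r|`: the upper bound makes the averaged quantity at most
`exp (-(ρ - √I)²) ≤ 1`, while the lower bound leaves the average of `exp (-(ρ² + I))`, which is
`exp (-(y + x + I)) I₀(2√(yx)) ≥ exp (-(y + x + I))`. Integrating these bounds on `K` against `F`
gives the bounds on the output density.
-/

open MeasureTheory Real Filter Topology

lemma besselI0_eq_circleAverage (r : ℝ) :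
    besselI0 r = circleAverage (fun z ↦ exp (r * z.re)) 0 1 := by
  simp [besselI0, circleAverage_def, circleMap, Complex.exp_ofReal_mul_I_re]

@[fun_prop]
lemma continuous_besselI0 : Continuous besselI0 :=
  (intervalIntegral.continuous_parametric_intervalIntegral_of_continuous'
    (by fun_prop) _ _).const_mul _

lemma circleAverage_one_add_mul_re (r R : ℝ) :
    circleAverage (fun z ↦ 1 + r * z.re) 0 R = 1 := by
  have h_re : circleAverage (Complex.reCLM ∘ fun z ↦ 1 + r * z) 0 R
      = Complex.reCLM (circleAverage (fun z ↦ 1 + r * z) 0 R) :=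
    Complex.reCLM.circleAverage_comp_comm (ContinuousOn.circleIntegrable' (by fun_prop))
  have h_mean : circleAverage (fun z : ℂ ↦ 1 + r * z) 0 R = 1 + r * 0 :=
    DiffContOnCl.circleAverage (Differentiable.diffContOnCl (by fun_prop))
  simpa [h_mean, Function.comp_def] using h_re

lemma one_le_besselI0 (r : ℝ) : 1 ≤ besselI0 r :=
  calc 1 = circleAverage (fun z ↦ 1 + r * z.re) 0 1 := (circleAverage_one_add_mul_re r 1).symm
    _ ≤ circleAverage (fun z ↦ exp (r * z.re)) 0 1 :=
        circleAverage_mono (ContinuousOn.circleIntegrable' (by fun_prop))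
          (ContinuousOn.circleIntegrable' (by fun_prop)) fun z _ ↦ by
            simpa only [add_comm] using add_one_le_exp (r * z.re)
    _ = besselI0 r := (besselI0_eq_circleAverage r).symm

lemma besselI0_le_exp_abs (r : ℝ) : besselI0 r ≤ exp |r| := by
  rw [besselI0_eq_circleAverage]
  refine circleAverage_mono_on_of_le_circle (ContinuousOn.circleIntegrable' (by fun_prop))
    fun z hz ↦ exp_le_exp.2 ?_
  have hz_norm : ‖z‖ = 1 := by simpa using hz
  calc r * z.re ≤ |r| * |z.re| := (le_abs_self _).trans_eq (abs_mul r z.re)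
    _ ≤ |r| * ‖z‖ := by gcongr; exact Complex.abs_re_le_norm z
    _ = |r| := by rw [hz_norm, mul_one]

/-- The density at `q` of the squared modulus of a complex Gaussian variable with mean `√I` and
unit total variance (the square of a Rice variable), meaningful for `0 ≤ I` and `0 ≤ q`. The kernel
`K I x y` is the average of this density over the squared moduli of `√y - √x * z`, `‖z‖ = 1`. -/
noncomputable def ricePowerDensity (I q : ℝ) : ℝ :=
  exp (-(q + I)) * besselI0 (2 * √(I * q))

@[fun_prop]
lemma continuous_ricePowerDensity (I : ℝ) : Continuous (ricePowerDensity I) := by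
  unfold ricePowerDensity
  fun_prop

lemma exp_neg_add_le_ricePowerDensity (I q : ℝ) : exp (-(q + I)) ≤ ricePowerDensity I q :=
  le_mul_of_one_le_right (exp_pos _).le (one_le_besselI0 _)

lemma ricePowerDensity_le_one {I q : ℝ} (hI : 0 ≤ I) (hq : 0 ≤ q) : ricePowerDensity I q ≤ 1 :=
  calc ricePowerDensity I q ≤ exp (-(q + I)) * exp |2 * √(I * q)| := by
        unfold ricePowerDensity
        gcongr
        exact besselI0_le_exp_abs _
    _ = exp (-(√q - √I) ^ 2) := by
        rw [← exp_add, abs_of_nonneg (by positivity), sqrt_mul hI]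
        congr 1
        linear_combination sq_sqrt hq + sq_sqrt hI
    _ ≤ 1 := exp_le_one_iff.2 (neg_nonpos.2 (sq_nonneg _))

lemma add_sub_two_mul_sqrt_mul_nonneg {x y c : ℝ} (hx : 0 ≤ x) (hy : 0 ≤ y) (hc : c ≤ 1) :
    0 ≤ y + x - 2 * √(y * x) * c := by
  have h_amgm : 2 * √(y * x) ≤ y + x := by
    simpa only [sqrt_mul hy, mul_assoc, sq_sqrt hx, sq_sqrt hy] using two_mul_le_add_sq (√y) (√x)
  have h_mul : 2 * √(y * x) * c ≤ 2 * √(y * x) := mul_le_of_le_one_right (by positivity) hc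
  linarith

lemma K_eq_integral_ricePowerDensity (I x y : ℝ) :
    K I x y = (1 / (2 * π)) *
      ∫ θ in (-π)..π, ricePowerDensity I (y + x - 2 * √(y * x) * cos θ) := by
  simp only [K, ricePowerDensity, sub_add_eq_add_sub]

lemma K_eq_circleAverage (I x y : ℝ) :
    K I x y = circleAverage (fun z ↦ ricePowerDensity I (y + x - 2 * √(y * x) * z.re)) 0 1 := by
  have h_periodic :
      Function.Periodic (fun θ ↦ ricePowerDensity I (y + x - 2 * √(y * x) * cos θ)) (2 * π) :=
    fun θ ↦ by simp only [cos_add_two_pi]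
  have h_shift := h_periodic.intervalIntegral_add_eq (-π) 0
  rw [show -π + 2 * π = π by ring, zero_add] at h_shift
  simp [K_eq_integral_ricePowerDensity, h_shift, circleAverage_def, circleMap,
    Complex.exp_ofReal_mul_I_re]

lemma continuous_K (I y : ℝ) : Continuous fun x ↦ K I x y := by
  simp only [K_eq_integral_ricePowerDensity]
  exact (intervalIntegral.continuous_parametric_intervalIntegral_of_continuous'
    (by fun_prop) _ _).const_mul _

lemma K_le_one {I x y : ℝ} (hI : 0 ≤ I) (hx : 0 ≤ x) (hy : 0 ≤ y) : K I x y ≤ 1 := by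
  rw [K_eq_circleAverage]
  refine circleAverage_mono_on_of_le_circle (ContinuousOn.circleIntegrable' (by fun_prop))
    fun z hz ↦ ricePowerDensity_le_one hI (add_sub_two_mul_sqrt_mul_nonneg hx hy ?_)
  have hz_norm : ‖z‖ = 1 := by simpa using hz
  exact (Complex.re_le_norm z).trans_eq hz_norm

lemma exp_mul_besselI0_le_K (I x y : ℝ) :
    exp (-(y + x + I)) * besselI0 (2 * √(y * x)) ≤ K I x y := by
  rw [besselI0_eq_circleAverage, K_eq_circleAverage, ← smul_eq_mul, ← circleAverage_fun_smul]
  refine circleAverage_mono (ContinuousOn.circleIntegrable' (by fun_prop))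
    (ContinuousOn.circleIntegrable' (by fun_prop)) fun z _ ↦ ?_
  calc exp (-(y + x + I)) * exp (2 * √(y * x) * z.re)
      = exp (-(y + x - 2 * √(y * x) * z.re + I)) := by
        rw [← exp_add]
        congr 1
        ring
    _ ≤ ricePowerDensity I (y + x - 2 * √(y * x) * z.re) := exp_neg_add_le_ricePowerDensity _ _

lemma exp_neg_le_K (I x y : ℝ) : exp (-(y + x + I)) ≤ K I x y :=
  (le_mul_of_one_le_right (exp_pos _).le (one_le_besselI0 _)).trans (exp_mul_besselI0_le_K I x y)

lemma K_pos (I x y : ℝ) : 0 < K I x y :=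
  (exp_pos _).trans_le (exp_neg_le_K I x y)

section OutputDensity

variable {I y : ℝ} {F : Measure ℝ} [IsFiniteMeasure F]

lemma integrable_exp_neg (hF : ∀ᵐ x ∂F, 0 ≤ x) : Integrable (fun x ↦ exp (-x)) F := by
  refine Integrable.of_bound (by fun_prop) 1 ?_
  filter_upwards [hF] with x hx
  simpa using hx

lemma integrable_K (hI : 0 ≤ I) (hF : ∀ᵐ x ∂F, 0 ≤ x) (hy : 0 ≤ y) :
    Integrable (fun x ↦ K I x y) F := by
  refine Integrable.of_bound (continuous_K I y).aestronglyMeasurable 1 ?_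
  filter_upwards [hF] with x hx
  rw [norm_of_nonneg (K_pos I x y).le]
  exact K_le_one hI hx hy

lemma outDen_le_measureReal_univ (hI : 0 ≤ I) (hF : ∀ᵐ x ∂F, 0 ≤ x) (hy : 0 ≤ y) :
    outDen I F y ≤ F.real Set.univ :=
  calc outDen I F y ≤ ∫ _, (1 : ℝ) ∂F := by
        refine integral_mono_ae (integrable_K hI hF hy) (integrable_const 1) ?_
        filter_upwards [hF] with x hx using K_le_one hI hx hy
    _ = F.real Set.univ := by simp

lemma exp_neg_mul_integral_exp_neg_le_outDen (hI : 0 ≤ I) (hF : ∀ᵐ x ∂F, 0 ≤ x) (hy : 0 ≤ y) :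
    exp (-(y + I)) * ∫ x, exp (-x) ∂F ≤ outDen I F y := by
  rw [← integral_const_mul]
  refine integral_mono ((integrable_exp_neg hF).const_mul _) (integrable_K hI hF hy) fun x ↦ ?_
  calc exp (-(y + I)) * exp (-x) = exp (-(y + x + I)) := by
        rw [← exp_add]
        congr 1
        ring
    _ ≤ K I x y := exp_neg_le_K I x y

end OutputDensity

theorem stmt_5_general {I : ℝ} (hI : 0 ≤ I) (F : Measure ℝ) [IsFiniteMeasure F] [NeZero F]
    (hsupp : F (Set.Iio 0) = 0) {y : ℝ} (hy : 0 ≤ y) :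
    exp (-(y + I + (-log (∫ x, exp (-x) ∂F)))) ≤ outDen I F y ∧
      outDen I F y ≤ F.real Set.univ := by
  have hF : ∀ᵐ x ∂F, 0 ≤ x := (measure_eq_zero_iff_ae_notMem.1 hsupp).mono fun _ ↦ Set.notMem_Iio.1
  have h_pos : 0 < ∫ x, exp (-x) ∂F := integral_exp_pos (integrable_exp_neg hF)
  refine ⟨?_, outDen_le_measureReal_univ hI hF hy⟩
  rw [neg_add, neg_neg, exp_add, exp_log h_pos]
  exact exp_neg_mul_integral_exp_neg_le_outDen hI hF hy

theorem stmt_5 (S I : ℝ) (hS : 0 ≤ S) (hI : 0 ≤ I) (F : Measure ℝ) [IsProbabilityMeasure F]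
    (hsupp : F (Set.Iio 0) = 0) (hmean : (∫ x, x ∂F) ≤ S) (y : ℝ) (hy : 0 ≤ y) :
    Real.exp (-(y + I + (-Real.log (∫ x, Real.exp (-x) ∂F)))) ≤ outDen I F y ∧
      outDen I F y ≤ 1 := by
  simpa only [probReal_univ] using stmt_5_general hI F hsupp hy
end

section
/- Let F be a probability measure on [0,∞) and let y ≥ 16·𝖨 with y ≥ 0. Then ∫_{[0, (√y/4 − √𝖨)²]} K(x,y) dF(x) ≤ e^{−y/2}. -/
/-!
With `R² = |√y - √x e^{iθ}|² = y + x - 2√(yx) cos θ`, the bound `I₀(r) ≤ exp |r|` makes the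
integrand of `K` at most `exp (-(R² + I) + 2√I R) = exp (-(R - √I)²)`. Since `R ≥ √y - √x`, this
gives a Gaussian bound in the amplitudes, `K(x, y) ≤ exp (-(√y - √x - √I)²)`, as soon as
`√x + √I ≤ √y`. For `√x ≤ √y/4 - √I` the exponent is at most `-9y/16`.
-/

open MeasureTheory Real Filter Topology

lemma abs_inv_mul_intervalIntegral_le {f : ℝ → ℝ} {C : ℝ} (a b : ℝ) (hf : ∀ t, |f t| ≤ C) :
    |1 / (b - a) * ∫ t in a..b, f t| ≤ C := by
  have hC : 0 ≤ C := (abs_nonneg _).trans (hf a)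
  have hint : |∫ t in a..b, f t| ≤ C * |b - a| :=
    intervalIntegral.norm_integral_le_of_norm_le_const (f := f) fun t _ => hf t
  rw [one_div_mul_eq_div, abs_div]
  exact div_le_of_le_mul₀ (abs_nonneg _) hC hint

lemma abs_besselI0_le_exp_abs (r : ℝ) : |besselI0 r| ≤ exp |r| := by
  have hcos (t : ℝ) : |exp (r * cos t)| ≤ exp |r| := by
    rw [abs_exp, exp_le_exp]
    calc r * cos t ≤ |r| * |cos t| := (le_abs_self _).trans_eq (abs_mul r (cos t))
      _ ≤ |r| := mul_le_of_le_one_right (abs_nonneg r) (abs_cos_le_one t)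
  simpa only [besselI0, sub_zero] using abs_inv_mul_intervalIntegral_le 0 (2 * π) hcos

lemma exp_mul_abs_besselI0_le {I d : ℝ} (hI : 0 ≤ I) (hd : 0 ≤ d) :
    exp (-(d + I)) * |besselI0 (2 * √(I * d))| ≤ exp (-(√d - √I) ^ 2) :=
  calc exp (-(d + I)) * |besselI0 (2 * √(I * d))|
      ≤ exp (-(d + I)) * exp (2 * √(I * d)) := by
        gcongr
        exact (abs_besselI0_le_exp_abs _).trans_eq (by rw [abs_of_nonneg (by positivity)])
    _ = exp (-(√d - √I) ^ 2) := by
        rw [← exp_add, sqrt_mul hI, sub_sq, sq_sqrt hd, sq_sqrt hI]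
        ring_nf

lemma sq_sqrt_sub_sqrt_le {x y : ℝ} (hx : 0 ≤ x) (hy : 0 ≤ y) (θ : ℝ) :
    (√y - √x) ^ 2 ≤ y + x - 2 * √(y * x) * cos θ := by
  have hcos : √(y * x) * cos θ ≤ √(y * x) :=
    mul_le_of_le_one_right (sqrt_nonneg _) (cos_le_one θ)
  rw [sub_sq, sq_sqrt hy, sq_sqrt hx, mul_assoc 2 √y, ← sqrt_mul hy]
  linarith

lemma abs_K_le_exp_neg_sq {I x y : ℝ} (hI : 0 ≤ I) (hx : 0 ≤ x) (hy : 0 ≤ y)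
    (hxy : √x + √I ≤ √y) : |K I x y| ≤ exp (-(√y - √x - √I) ^ 2) := by
  have hintegrand (θ : ℝ) :
      |exp (-(y + x + I - 2 * √(y * x) * cos θ)) *
        besselI0 (2 * √(I * (y + x - 2 * √(y * x) * cos θ)))|
        ≤ exp (-(√y - √x - √I) ^ 2) := by
    have hdist := sq_sqrt_sub_sqrt_le hx hy θ
    rw [abs_mul, abs_exp, add_sub_right_comm]
    refine (exp_mul_abs_besselI0_le hI ((sq_nonneg _).trans hdist)).trans ?_
    have hnonneg : 0 ≤ √y - √x - √I := by linarith
    have hR : √y - √x ≤ √(y + x - 2 * √(y * x) * cos θ) := le_sqrt_of_sq_le hdist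
    gcongr
  simpa only [K, sub_neg_eq_add, ← two_mul] using
    abs_inv_mul_intervalIntegral_le (-π) π hintegrand

theorem stmt_8_general {I y ρ : ℝ} (hI : 0 ≤ I) (hy : 0 ≤ y) (hIρ : √I ≤ ρ) (hρy : ρ ≤ √y)
    (F : Measure ℝ) [IsFiniteMeasureOnCompacts F] :
    ∫ x in Set.Icc 0 ((ρ - √I) ^ 2), K I x y ∂F
      ≤ exp (-(√y - ρ) ^ 2) * F.real (Set.Icc 0 ((ρ - √I) ^ 2)) := by
  have hK : ∀ x ∈ Set.Icc 0 ((ρ - √I) ^ 2), ‖K I x y‖ ≤ exp (-(√y - ρ) ^ 2) := by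
    rintro x ⟨hx, hxρ⟩
    have hsqrt : √x ≤ ρ - √I := sqrt_le_iff.mpr ⟨sub_nonneg.mpr hIρ, hxρ⟩
    refine (abs_K_le_exp_neg_sq hI hx hy (by linarith)).trans ?_
    have hle : √y - ρ ≤ √y - √x - √I := by linarith
    exact exp_le_exp.mpr (neg_le_neg (pow_le_pow_left₀ (sub_nonneg.mpr hρy) hle 2))
  exact (le_abs_self _).trans
    (norm_setIntegral_le_of_norm_le_const isCompact_Icc.measure_lt_top hK)

theorem stmt_8 (I : ℝ) (hI : 0 ≤ I) (F : Measure ℝ) [IsProbabilityMeasure F]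
    (hsupp : F (Set.Iio 0) = 0) (y : ℝ) (hy : 0 ≤ y) (hyI : 16 * I ≤ y) :
    (∫ x in Set.Icc (0:ℝ) ((Real.sqrt y / 4 - Real.sqrt I)^2), K I x y ∂F)
      ≤ Real.exp (-y / 2) := by
  have hIy : √I ≤ √y / 4 := sqrt_le_iff.mpr ⟨by positivity, by rw [div_pow, sq_sqrt hy]; linarith⟩
  have hexp : -(√y - √y / 4) ^ 2 ≤ -y / 2 := by nlinarith [sq_sqrt hy]
  calc ∫ x in Set.Icc 0 ((√y / 4 - √I) ^ 2), K I x y ∂F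
      ≤ exp (-(√y - √y / 4) ^ 2) * F.real (Set.Icc 0 ((√y / 4 - √I) ^ 2)) :=
        stmt_8_general hI hy hIy (div_le_self (sqrt_nonneg y) (by norm_num)) F
    _ ≤ exp (-(√y - √y / 4) ^ 2) := mul_le_of_le_one_right (exp_pos _).le measureReal_le_one
    _ ≤ exp (-y / 2) := exp_le_exp.mpr hexp
end

section
/- Invertibility of the kernel transform: let g : [0,∞) → ℝ be continuous and Lebesgue integrable. If ∫₀^∞ K(x,y) · g(x) dx = 0 for every y ≥ 0, then g(x) = 0 for every x ≥ 0. By the symmetry K(x,y) = K(y,x) of the kernel, the transform g ↦ (x ↦ ∫₀^∞ K(x,y) g(y) dy) is injective on the same class of functions as well. -/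
/-!
Read `x` and `y` as squared moduli of points of the plane. The law of cosines, applied twice, turns
`K I x (‖w‖ ^ 2)` into the average over the circle of radius `√x` about `w` of the function
`ringGaussian √I`, itself the average of the Gaussian `exp (-‖·‖ ^ 2)` over its translates by the
circle of radius `√I`. In polar coordinates the transform of `g` is then `1 / π` times the planar
convolution of `ringGaussian √I` with the radial function `g (‖·‖ ^ 2)`, whose Fourier transform is
the Hankel transform of order zero of `g`.

Averaging over translates multiplies the Fourier transform by the characteristic function of the
averaging measure. For a measure with exponential moments, that function extends analytically from
each line through the origin to a strip and is nonzero at the origin, so its zeros have empty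
interior. The Fourier transform of `ringGaussian √I` is thus nonzero on a dense set, and this makes
convolution with it injective on integrable functions.
-/

open MeasureTheory Real Filter Topology

open scoped FourierTransform Convolution ContDiff

section Fourier

variable {V : Type*} [NormedAddCommGroup V] [InnerProductSpace ℝ V] [FiniteDimensional ℝ V]
  [MeasurableSpace V] [BorelSpace V]

section Uniqueness

variable {E : Type*} [NormedAddCommGroup E]

lemma continuous_fourier [NormedSpace ℂ E] {f : V → E} (hf : Integrable f) : Continuous (𝓕 f) :=
  VectorFourier.fourierIntegral_continuous Real.continuous_fourierChar
    (by exact continuous_inner) hf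

lemma integral_fourier_smul_eq [NormedSpace ℂ E] [CompleteSpace E] {φ : V → ℂ} {f : V → E}
    (hφ : Integrable φ) (hf : Integrable f) :
    ∫ ξ, 𝓕 φ ξ • f ξ = ∫ v, φ v • 𝓕 f v := by
  have h := VectorFourier.integral_fourierIntegral_smul_eq_flip (L := innerₗ V)
    Real.continuous_fourierChar continuous_inner hφ hf
  rwa [flip_innerₗ] at h

lemma ae_eq_of_fourier_eq [NormedSpace ℂ E] [CompleteSpace E] {f₁ f₂ : V → E}
    (hf₁ : Integrable f₁) (hf₂ : Integrable f₂) (h : 𝓕 f₁ = 𝓕 f₂) : f₁ =ᵐ[volume] f₂ := by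
  refine ae_eq_of_integral_contDiff_smul_eq hf₁.locallyIntegrable hf₂.locallyIntegrable
    fun g hg hsupp => ?_
  have hsupp' : HasCompactSupport fun v => (g v : ℂ) := hsupp.comp_left Complex.ofReal_zero
  have hg' : ContDiff ℝ ∞ fun v => (g v : ℂ) := Complex.ofRealCLM.contDiff.comp hg
  let φ : SchwartzMap V ℂ := hsupp'.toSchwartzMap hg'
  let ψ : SchwartzMap V ℂ := 𝓕⁻ φ
  have hψ : 𝓕 ⇑ψ = φ := by rw [← SchwartzMap.fourier_coe, FourierTransform.fourier_fourierInv_eq]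
  have hpair {f : V → E} (hf : Integrable f) : ∫ v, g v • f v = ∫ v, ψ v • 𝓕 f v := by
    rw [← integral_fourier_smul_eq ψ.integrable hf, hψ]
    rfl
  rw [hpair hf₁, hpair hf₂, h]

lemma ae_eq_of_convolution_ae_eq [NormedSpace ℂ E] [CompleteSpace E] {p : V → ℂ}
    {f₁ f₂ : V → E} (hp : Integrable p) (hdense : Dense {ξ | 𝓕 p ξ ≠ 0})
    (hf₁ : Integrable f₁) (hf₂ : Integrable f₂)
    (h : p ⋆[ContinuousLinearMap.lsmul ℂ ℂ] f₁ =ᵐ[volume] p ⋆[ContinuousLinearMap.lsmul ℂ ℂ] f₂) :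
    f₁ =ᵐ[volume] f₂ := by
  have hmul (ξ : V) : 𝓕 p ξ • 𝓕 f₁ ξ = 𝓕 p ξ • 𝓕 f₂ ξ := by
    rw [← Real.fourier_smul_convolution_eq hp hf₁, ← Real.fourier_smul_convolution_eq hp hf₂,
      Real.fourier_eq, Real.fourier_eq]
    exact integral_congr_ae (h.mono fun v hv => by simp only [hv])
  exact ae_eq_of_fourier_eq hf₁ hf₂ ((continuous_fourier hf₁).ext_on hdense
    (continuous_fourier hf₂) fun ξ hξ => smul_right_injective E hξ (hmul ξ))

lemma convolution_ofReal_comp_dual [NormedSpace ℝ E] [CompleteSpace E] {p : V → ℝ} {f : V → E}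
    (ℓ : StrongDual ℝ E) {w : V}
    (h : ConvolutionExistsAt p f w (ContinuousLinearMap.lsmul ℝ ℝ) volume) :
    ((fun v => (p v : ℂ)) ⋆[ContinuousLinearMap.lsmul ℂ ℂ] fun v => (ℓ (f v) : ℂ)) w =
      ℓ ((p ⋆[ContinuousLinearMap.lsmul ℝ ℝ] f) w) := by
  have hℓ : ∫ t, p t * ℓ (f (w - t)) = ℓ (∫ t, p t • f (w - t)) := by
    simpa using ℓ.integral_comp_comm h
  simp only [convolution, ContinuousLinearMap.lsmul_apply, smul_eq_mul, ← Complex.ofReal_mul]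
  rw [integral_complex_ofReal, hℓ]

lemma ae_eq_of_real_convolution_ae_eq [NormedSpace ℝ E] [CompleteSpace E] {p : V → ℝ}
    {f₁ f₂ : V → E} (hp : Integrable p) (hdense : Dense {ξ | 𝓕 (fun v => (p v : ℂ)) ξ ≠ 0})
    (hf₁ : Integrable f₁) (hf₂ : Integrable f₂)
    (h : p ⋆[ContinuousLinearMap.lsmul ℝ ℝ] f₁ =ᵐ[volume] p ⋆[ContinuousLinearMap.lsmul ℝ ℝ] f₂) :
    f₁ =ᵐ[volume] f₂ := by
  obtain ⟨t, ht, htf⟩ := (hf₁.sub hf₂).aestronglyMeasurable.isSeparable_ae_range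
  refine (sub_ae_eq_zero f₁ f₂).1 (ae_eq_zero_of_forall_dual_of_isSeparable ℝ ht (fun ℓ => ?_) htf)
  have hℓ : (fun v => (ℓ (f₁ v) : ℂ)) =ᵐ[volume] fun v => (ℓ (f₂ v) : ℂ) := by
    have hpC : Integrable fun v => (p v : ℂ) := hp.ofReal
    refine ae_eq_of_convolution_ae_eq hpC hdense (ℓ.integrable_comp hf₁).ofReal
      (ℓ.integrable_comp hf₂).ofReal ?_
    filter_upwards [h, hp.ae_convolution_exists (ContinuousLinearMap.lsmul ℝ ℝ) hf₁,
      hp.ae_convolution_exists (ContinuousLinearMap.lsmul ℝ ℝ) hf₂] with w hw hw₁ hw₂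
    rw [convolution_ofReal_comp_dual ℓ hw₁, convolution_ofReal_comp_dual ℓ hw₂, hw]
  filter_upwards [hℓ] with v hv
  simpa [sub_eq_zero] using hv

end Uniqueness

section CharFun

open ProbabilityTheory

variable {W : Type*} [NormedAddCommGroup W] [InnerProductSpace ℝ W] [MeasurableSpace W]
  {μ : Measure W}

lemma complexMGF_inner_mul_I (μ : Measure W) (ξ : W) (t : ℝ) :
    complexMGF (fun v => inner ℝ v ξ) μ (t * Complex.I) = charFun μ (t • ξ) := by
  simp only [complexMGF, charFun_apply, inner_smul_right]
  congr! 3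
  push_cast
  ring

lemma isPreconnected_re_mem_interior_integrableExpSet {Ω : Type*} [MeasurableSpace Ω]
    (X : Ω → ℝ) (μ : Measure Ω) :
    IsPreconnected {z : ℂ | z.re ∈ interior (integrableExpSet X μ)} :=
  (convex_integrableExpSet.interior.linear_preimage Complex.reLm).isPreconnected

lemma tendsto_ofReal_mul_I_nhdsNE_one :
    Tendsto (fun t : ℝ => (t : ℂ) * Complex.I) (𝓝[≠] 1) (𝓝[≠] Complex.I) := by
  have hc : Continuous fun t : ℝ => (t : ℂ) * Complex.I := by fun_prop
  have hlim := hc.tendsto 1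
  rw [Complex.ofReal_one, one_mul] at hlim
  refine tendsto_nhdsWithin_of_tendsto_nhds_of_eventually_within _
    (hlim.mono_left nhdsWithin_le_nhds) ?_
  filter_upwards [self_mem_nhdsWithin] with t ht
  simpa using ht

/-- If the characteristic function vanished near `ξ`, the identity theorem on the strip of
convergence of `z ↦ ∫ v, exp (z * ⟪v, ξ⟫) ∂μ` would propagate the zero from `z = i` to `z = 0`. -/
lemma dense_charFun_ne_zero [IsFiniteMeasure μ] [NeZero μ]
    (hexp : ∀ ξ : W, 0 ∈ interior (integrableExpSet (fun v => inner ℝ v ξ) μ)) :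
    Dense {ξ | charFun μ ξ ≠ 0} := by
  refine fun ξ => mem_closure_iff_frequently.2 fun hzero => ?_
  have hnear : ∀ᶠ t : ℝ in 𝓝 1, complexMGF (fun v => inner ℝ v ξ) μ (t * Complex.I) = 0 := by
    have hc : Continuous fun t : ℝ => t • ξ := by fun_prop
    have hlim : Tendsto (fun t : ℝ => t • ξ) (𝓝 1) (𝓝 ξ) := by simpa using hc.tendsto 1
    filter_upwards [hlim.eventually hzero] with t ht
    simpa [complexMGF_inner_mul_I] using ht
  have hfreq : ∃ᶠ z in 𝓝[≠] Complex.I, complexMGF (fun v => inner ℝ v ξ) μ z = 0 :=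
    tendsto_ofReal_mul_I_nhdsNE_one.frequently (hnear.filter_mono nhdsWithin_le_nhds).frequently
  have h0 := analyticOnNhd_complexMGF.eqOn_zero_of_preconnected_of_frequently_eq_zero
    (isPreconnected_re_mem_interior_integrableExpSet _ μ) (by simpa using hexp ξ) hfreq
    (show (0 : ℂ) ∈ _ by simpa using hexp ξ)
  have hmass : μ.real Set.univ = 0 := by
    simpa [h0] using (complexMGF_inner_mul_I μ ξ 0).symm
  exact measureReal_univ_ne_zero hmass

end CharFun

section Average

variable {E : Type*} [NormedAddCommGroup E] {μ : Measure V} [IsFiniteMeasure μ]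

lemma integrable_comp_add_prod {f : V → E} (hf : Integrable f) :
    Integrable (fun q : V × V => f (q.1 + q.2)) (volume.prod μ) := by
  simpa [Function.comp_def] using
    (measurePreserving_add_prod (volume : Measure V) μ).integrable_comp_of_integrable
      (hf.comp_fst μ)

lemma fourier_integral_comp_add [NormedSpace ℂ E] [CompleteSpace E] {f : V → E} (hf : Integrable f)
    (ξ : V) : 𝓕 (fun u => ∫ v, f (u + v) ∂μ) ξ = charFun μ ((2 * π) • ξ) • 𝓕 f ξ := by
  have hint : Integrable (Function.uncurry fun u v => 𝐞 (-inner ℝ u ξ) • f (u + v))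
      (volume.prod μ) := by
    have hF := integrable_comp_add_prod (μ := μ) hf
    refine hF.norm.mono' (AEStronglyMeasurable.smul ?_ hF.aestronglyMeasurable)
      (.of_forall fun q => by simp [Function.uncurry])
    exact Continuous.aestronglyMeasurable (by fun_prop)
  calc 𝓕 (fun u => ∫ v, f (u + v) ∂μ) ξ
      = ∫ u, ∫ v, 𝐞 (-inner ℝ u ξ) • f (u + v) ∂μ := by
        simp_rw [Real.fourier_eq, Circle.smul_def, integral_smul]
    _ = ∫ v, (∫ u, 𝐞 (-inner ℝ u ξ) • f (u + v)) ∂μ := integral_integral_swap hint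
    _ = ∫ v, Complex.exp (inner ℝ v ((2 * π) • ξ) * Complex.I) • 𝓕 f ξ ∂μ := by
        refine integral_congr_ae (.of_forall fun v => ?_)
        beta_reduce
        rw [← integral_sub_right_eq_self _ v, Real.fourier_eq, ← integral_smul]
        refine integral_congr_ae (.of_forall fun u => ?_)
        simp only [sub_add_cancel, inner_sub_left, inner_smul_right, Circle.smul_def,
          Real.fourierChar_apply, smul_smul, ← Complex.exp_add]
        congr 2
        push_cast
        ring
    _ = charFun μ ((2 * π) • ξ) • 𝓕 f ξ := by rw [integral_smul_const, charFun_apply]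

end Average

section Gaussian

lemma integrable_exp_neg_norm_sq : Integrable fun v : V => rexp (-‖v‖ ^ 2) := by
  have h := (GaussianFourier.integrable_cexp_neg_mul_sq_norm_add (b := 1) (by simp) 0 (0 : V)).norm
  simpa [Complex.norm_exp, ← Complex.ofReal_pow] using h

lemma fourier_exp_neg_norm_sq_ne_zero (ξ : V) :
    𝓕 (fun v : V => ((rexp (-‖v‖ ^ 2) : ℝ) : ℂ)) ξ ≠ 0 := by
  have h := fourier_gaussian_innerProductSpace (b := 1) (by simp) ξ
  simp only [neg_one_mul] at h
  push_cast
  simp [h, pi_ne_zero]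

end Gaussian

end Fourier

section Circle

variable {E : Type*} [NormedAddCommGroup E]

lemma norm_circleMap_arg_add_sq (w : ℂ) (R θ : ℝ) :
    ‖circleMap w R (θ + w.arg)‖ ^ 2 = ‖w‖ ^ 2 + R ^ 2 + 2 * ‖w‖ * R * Real.cos θ := by
  have hw : circleMap w R (θ + w.arg) =
      (‖w‖ + R * Complex.exp (θ * Complex.I)) * Complex.exp (w.arg * Complex.I) := by
    rw [circleMap, add_mul, Complex.norm_mul_exp_arg_mul_I, Complex.ofReal_add, add_mul,
      Complex.exp_add, mul_assoc]
  rw [hw, norm_mul, Complex.norm_exp_ofReal_mul_I, mul_one, Complex.sq_norm, Complex.normSq_apply]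
  simp only [Complex.add_re, Complex.add_im, Complex.mul_re, Complex.mul_im, Complex.ofReal_re,
    Complex.ofReal_im, Complex.exp_ofReal_mul_I_re, Complex.exp_ofReal_mul_I_im, zero_mul, sub_zero,
    add_zero, zero_add]
  linear_combination R ^ 2 * Real.sin_sq_add_cos_sq θ

variable [NormedSpace ℝ E]

lemma circleAverage_norm_sq (F : ℝ → E) (w : ℂ) (R a : ℝ) :
    circleAverage (fun z => F (‖z‖ ^ 2)) w R =
      (2 * π)⁻¹ • ∫ θ in a..a + 2 * π, F (‖w‖ ^ 2 + R ^ 2 - 2 * ‖w‖ * R * Real.cos θ) := by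
  rw [← circleAverage_neg_radius, circleAverage_eq_integral_add w.arg]
  simp only [norm_circleMap_arg_add_sq]
  have hper : Function.Periodic
      (fun θ => F (‖w‖ ^ 2 + R ^ 2 - 2 * ‖w‖ * R * Real.cos θ)) (2 * π) := by
    intro θ
    simp only [Real.cos_add_two_pi]
  rw [hper.intervalIntegral_add_eq a 0]
  simp [sub_eq_add_neg]

lemma polarCoord_symm_eq_circleMap (p : ℝ × ℝ) :
    Complex.polarCoord.symm p = circleMap 0 p.1 p.2 := by
  rw [Complex.polarCoord_symm_apply, circleMap, zero_add, Complex.exp_mul_I, Complex.ofReal_cos,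
    Complex.ofReal_sin]

lemma integrableOn_polarCoord_symm {f : ℝ × ℝ → E} (hf : Integrable f) :
    IntegrableOn (fun p => p.1 • f (polarCoord.symm p)) polarCoord.target := by
  have h := (integrableOn_image_iff_integrableOn_abs_det_fderiv_smul volume
    polarCoord.open_target.measurableSet
    (fun p _ => (hasFDerivAt_polarCoord_symm p).hasFDerivWithinAt) polarCoord.symm.injOn f).1
    hf.integrableOn
  refine h.congr_fun (fun p hp => ?_) polarCoord.open_target.measurableSet
  simp only [det_fderivPolarCoordSymm, abs_of_pos (show 0 < p.1 from hp.1)]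

lemma integrableOn_smul_circleMap {f : ℂ → E} (hf : Integrable f) :
    IntegrableOn (fun p : ℝ × ℝ => p.1 • f (circleMap 0 p.1 p.2))
      (Set.Ioi 0 ×ˢ Set.Ioo (-π) π) := by
  have hf' := Complex.volume_preserving_equiv_real_prod.symm.integrable_comp_of_integrable hf
  simpa only [Function.comp_def, polarCoord_target, polarCoord_symm_eq_circleMap,
    Complex.measurableEquivRealProd_symm_polarCoord_symm_apply]
    using integrableOn_polarCoord_symm hf'

lemma circleAverage_eq_integral_Ioo (f : ℂ → E) (c : ℂ) (R : ℝ) :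
    circleAverage f c R = (2 * π)⁻¹ • ∫ θ in Set.Ioo (-π) π, f (circleMap c R θ) := by
  have hper : Function.Periodic (fun θ => f (circleMap c R θ)) (2 * π) :=
    (periodic_circleMap c R).comp f
  have h := hper.intervalIntegral_add_eq (-π) 0
  rw [circleAverage, ← integral_Ioc_eq_integral_Ioo,
    ← intervalIntegral.integral_of_le (by linarith [pi_pos])]
  rw [zero_add, show -π + 2 * π = π by ring] at h
  rw [h]

lemma integral_eq_integral_circleAverage {f : ℂ → E} (hf : Integrable f) :
    ∫ z, f z = (2 * π) • ∫ r in Set.Ioi (0 : ℝ), r • circleAverage f 0 r := by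
  calc ∫ z, f z = ∫ p in Set.Ioi (0 : ℝ) ×ˢ Set.Ioo (-π) π, p.1 • f (circleMap 0 p.1 p.2) := by
        simp only [← Complex.integral_comp_polarCoord_symm f, polarCoord_symm_eq_circleMap,
          polarCoord_target]
    _ = ∫ r in Set.Ioi (0 : ℝ), ∫ θ in Set.Ioo (-π) π, r • f (circleMap 0 r θ) := by
        exact setIntegral_prod _ (integrableOn_smul_circleMap hf)
    _ = ∫ r in Set.Ioi (0 : ℝ), (2 * π) • r • circleAverage f 0 r := by
        simp only [circleAverage_eq_integral_Ioo, smul_smul, integral_smul]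
        congr! 2 with r
        field_simp
    _ = (2 * π) • ∫ r in Set.Ioi (0 : ℝ), r • circleAverage f 0 r := integral_smul _ _

lemma integral_eq_integral_circleAverage_sqrt {f : ℂ → E} (hf : Integrable f) :
    ∫ z, f z = π • ∫ x in Set.Ioi (0 : ℝ), circleAverage f 0 √x := by
  rw [integral_eq_integral_circleAverage hf,
    ← integral_comp_rpow_Ioi_of_pos (g := fun x => circleAverage f 0 √x) two_pos, mul_comm,
    mul_smul, ← integral_smul]
  congr 1
  refine setIntegral_congr_fun measurableSet_Ioi fun r hr => ?_
  have hr : 0 ≤ r := le_of_lt hr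
  norm_num [mul_smul, Real.sqrt_sq hr]

lemma integrable_comp_norm_sq {g : ℝ → E} (hg : IntegrableOn g (Set.Ioi 0)) :
    Integrable fun z : ℂ => g (‖z‖ ^ 2) := by
  have h : IntegrableOn (fun r : ℝ => r • g (r ^ 2)) (Set.Ioi 0) := by
    have h := (integrableOn_Ioi_comp_rpow_iff' g two_ne_zero).2 hg
    norm_num at h
    exact h
  rw [integrable_fun_norm_addHaar volume (f := fun r => g (r ^ 2)), Complex.finrank_real_complex]
  simpa using h

lemma integral_comp_norm_sq [CompleteSpace E] {g : ℝ → E} (hg : IntegrableOn g (Set.Ioi 0)) :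
    ∫ z : ℂ, g (‖z‖ ^ 2) = π • ∫ x in Set.Ioi (0 : ℝ), g x := by
  rw [integral_eq_integral_circleAverage_sqrt (integrable_comp_norm_sq hg)]
  congr 1
  refine setIntegral_congr_fun measurableSet_Ioi fun x hx => circleAverage_const_on_circle
    fun z hz => ?_
  rw [mem_sphere_zero_iff_norm, abs_of_nonneg (Real.sqrt_nonneg x)] at hz
  rw [hz, Real.sq_sqrt (le_of_lt hx)]

omit [NormedSpace ℝ E] in
lemma ae_eq_of_comp_norm_sq_ae_eq {g₁ g₂ : ℝ → E} (hg₁ : IntegrableOn g₁ (Set.Ioi 0))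
    (hg₂ : IntegrableOn g₂ (Set.Ioi 0))
    (h : (fun z : ℂ => g₁ (‖z‖ ^ 2)) =ᵐ[volume] fun z => g₂ (‖z‖ ^ 2)) :
    g₁ =ᵐ[volume.restrict (Set.Ioi 0)] g₂ := by
  have hg : IntegrableOn (fun x => ‖g₁ x - g₂ x‖) (Set.Ioi 0) := (hg₁.sub hg₂).norm
  have hplane : ∫ z : ℂ, ‖g₁ (‖z‖ ^ 2) - g₂ (‖z‖ ^ 2)‖ = 0 :=
    integral_eq_zero_of_ae (h.mono fun z hz => by simp [sub_eq_zero.2 hz])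
  have hline : ∫ x in Set.Ioi (0 : ℝ), ‖g₁ x - g₂ x‖ = 0 := by
    simpa [integral_comp_norm_sq hg, pi_ne_zero] using hplane
  have hzero := (integral_eq_zero_iff_of_nonneg (fun x => norm_nonneg (g₁ x - g₂ x)) hg).1 hline
  exact hzero.mono fun x hx => sub_eq_zero.1 (norm_eq_zero.1 hx)

lemma circleAverage_zero_comp_const_sub (f : ℂ → E) (w : ℂ) (R : ℝ) :
    circleAverage (fun z => f (w - z)) 0 R = circleAverage f w R := by
  rw [← circleAverage_neg_radius]
  simp [circleAverage, circleMap, sub_eq_add_neg]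

lemma integral_smul_comp_norm_sq [CompleteSpace E] {p : ℂ → ℝ} {g : ℝ → E} {w : ℂ}
    (h : Integrable fun z => p (w - z) • g (‖z‖ ^ 2)) :
    ∫ z, p (w - z) • g (‖z‖ ^ 2) =
      π • ∫ x in Set.Ioi (0 : ℝ), circleAverage p w √x • g x := by
  rw [integral_eq_integral_circleAverage_sqrt h]
  congr 1
  refine setIntegral_congr_fun measurableSet_Ioi fun x hx => ?_
  rw [← circleAverage_zero_comp_const_sub p w √x, circleAverage, circleAverage]
  simp only [norm_circleMap_zero, sq_abs, Real.sq_sqrt (le_of_lt hx)]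
  rw [intervalIntegral.integral_smul_const, smul_assoc]

/-- The uniform probability measure on the circle of radius `|R|` about the origin, the law of
`circleMap 0 R` at a uniformly distributed angle. -/
noncomputable def circleUniform (R : ℝ) : Measure ℂ :=
  (ProbabilityTheory.cond volume (Set.Ioc 0 (2 * π))).map (circleMap 0 R)

instance (R : ℝ) : IsProbabilityMeasure (circleUniform R) := by
  have : IsProbabilityMeasure (ProbabilityTheory.cond volume (Set.Ioc 0 (2 * π))) :=
    ProbabilityTheory.cond_isProbabilityMeasure_of_finite (by simp [pi_pos]) measure_Ioc_lt_top.ne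
  exact Measure.isProbabilityMeasure_map (measurable_circleMap 0 R).aemeasurable

lemma ae_circleUniform_norm_eq (R : ℝ) : ∀ᵐ v ∂circleUniform R, ‖v‖ = |R| := by
  rw [circleUniform, ae_map_iff (measurable_circleMap 0 R).aemeasurable
    (measurableSet_eq_fun measurable_norm measurable_const)]
  exact .of_forall fun θ => by simp

lemma dense_charFun_circleUniform_ne_zero (R : ℝ) :
    Dense {ξ | charFun (circleUniform R) ξ ≠ 0} := by
  refine dense_charFun_ne_zero fun ξ => ?_
  suffices h : ProbabilityTheory.integrableExpSet (fun v => inner ℝ v ξ) (circleUniform R) =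
      Set.univ by
    rw [h, interior_univ]
    exact Set.mem_univ 0
  refine Set.eq_univ_of_forall fun t => ProbabilityTheory.integrable_exp_mul_of_mem_Icc
    (a := -(|R| * ‖ξ‖)) (b := |R| * ‖ξ‖) (by fun_prop) ?_
  filter_upwards [ae_circleUniform_norm_eq R] with v hv
  exact abs_le.1 (hv ▸ abs_real_inner_le_norm v ξ)

lemma circleAverage_eq_integral_circleUniform {f : ℂ → E} (hf : Continuous f) (c : ℂ) (R : ℝ) :
    circleAverage f c R = ∫ v, f (c + v) ∂circleUniform R := by
  rw [circleUniform, integral_map (measurable_circleMap 0 R).aemeasurable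
    (Continuous.aestronglyMeasurable (by fun_prop)), ProbabilityTheory.cond, integral_smul_measure,
    circleAverage, intervalIntegral.integral_of_le two_pi_pos.le]
  simp [circleMap, pi_pos.le]

end Circle

/-- The Gaussian `exp (-‖·‖ ^ 2)` averaged over the translates by the circle of radius `a`. -/
noncomputable def ringGaussian (a : ℝ) (u : ℂ) : ℝ :=
  circleAverage (fun z => rexp (-‖z‖ ^ 2)) u a

lemma ringGaussian_sqrt {I : ℝ} (hI : 0 ≤ I) (u : ℂ) :
    ringGaussian (√I) u = rexp (-(‖u‖ ^ 2 + I)) * besselI0 (2 * √(I * ‖u‖ ^ 2)) := by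
  rw [ringGaussian, circleAverage_norm_sq (fun s => rexp (-s)) u (√I) 0, besselI0, smul_eq_mul,
    mul_left_comm, zero_add, one_div]
  congr 1
  rw [← intervalIntegral.integral_const_mul]
  congr! 2
  rw [← Real.exp_add, Real.sq_sqrt hI, Real.sqrt_mul hI, Real.sqrt_sq (norm_nonneg u)]
  ring_nf

lemma K_eq_circleAverage_s14 {I x : ℝ} (hI : 0 ≤ I) (hx : 0 ≤ x) (w : ℂ) :
    K I x (‖w‖ ^ 2) = circleAverage (ringGaussian √I) w √x := by
  have hr := circleAverage_norm_sq
    (fun s => rexp (-(s + I)) * besselI0 (2 * √(I * s))) w (√x) (-π)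
  simp only [← ringGaussian_sqrt hI] at hr
  rw [hr, K, one_div, smul_eq_mul, neg_add_eq_sub, two_mul, add_sub_cancel_right,
    Real.sqrt_mul (by positivity), Real.sqrt_sq (norm_nonneg w), Real.sq_sqrt hx]
  ring_nf

lemma ringGaussian_eq_integral (a : ℝ) (u : ℂ) :
    ringGaussian a u = ∫ v, rexp (-‖u + v‖ ^ 2) ∂circleUniform a :=
  circleAverage_eq_integral_circleUniform (by fun_prop) u a

lemma integrable_ringGaussian (a : ℝ) : Integrable (ringGaussian a) := by
  simpa only [← ringGaussian_eq_integral] using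
    (integrable_comp_add_prod (μ := circleUniform a)
      (integrable_exp_neg_norm_sq (V := ℂ))).integral_prod_left

lemma fourier_ringGaussian (a : ℝ) (ξ : ℂ) :
    𝓕 (fun u => (ringGaussian a u : ℂ)) ξ =
      charFun (circleUniform a) ((2 * π) • ξ) • 𝓕 (fun v : ℂ => ((rexp (-‖v‖ ^ 2) : ℝ) : ℂ)) ξ := by
  simp only [ringGaussian_eq_integral, ← integral_complex_ofReal]
  have hgauss : Integrable fun v : ℂ => ((rexp (-‖v‖ ^ 2) : ℝ) : ℂ) :=
    integrable_exp_neg_norm_sq.ofReal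
  exact fourier_integral_comp_add hgauss ξ

lemma dense_fourier_ringGaussian_ne_zero (a : ℝ) :
    Dense {ξ | 𝓕 (fun u => (ringGaussian a u : ℂ)) ξ ≠ 0} := by
  have hscale : IsOpenMap fun ξ : ℂ => (2 * π) • ξ := isOpenMap_smul₀ two_pi_pos.ne'
  refine ((dense_charFun_circleUniform_ne_zero a).preimage hscale).mono fun ξ hξ => ?_
  change 𝓕 (fun u => (ringGaussian a u : ℂ)) ξ ≠ 0
  rw [fourier_ringGaussian]
  exact smul_ne_zero hξ (fourier_exp_neg_norm_sq_ne_zero ξ)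

section Transform

variable {E : Type*} [NormedAddCommGroup E] [NormedSpace ℝ E] [CompleteSpace E] {I : ℝ}

lemma convolution_ringGaussian_comp_norm_sq (hI : 0 ≤ I) {g : ℝ → E} {w : ℂ}
    (h : ConvolutionExistsAt (ringGaussian √I) (fun z => g (‖z‖ ^ 2)) w
      (ContinuousLinearMap.lsmul ℝ ℝ) volume) :
    (ringGaussian √I ⋆[ContinuousLinearMap.lsmul ℝ ℝ] fun z => g (‖z‖ ^ 2)) w =
      π • ∫ x in Set.Ioi (0 : ℝ), K I x (‖w‖ ^ 2) • g x := by
  rw [convolution_lsmul_swap, integral_smul_comp_norm_sq h.integrable_swap]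
  congr 1
  refine setIntegral_congr_fun measurableSet_Ioi fun x hx => ?_
  rw [K_eq_circleAverage_s14 hI (le_of_lt hx)]

theorem stmt_14_general (hI : 0 ≤ I) {g₁ g₂ : ℝ → E} (hg₁ : IntegrableOn g₁ (Set.Ioi 0))
    (hg₂ : IntegrableOn g₂ (Set.Ioi 0))
    (h : ∀ y : ℝ, 0 ≤ y →
      ∫ x in Set.Ioi (0 : ℝ), K I x y • g₁ x = ∫ x in Set.Ioi (0 : ℝ), K I x y • g₂ x) :
    g₁ =ᵐ[volume.restrict (Set.Ioi 0)] g₂ := by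
  refine ae_eq_of_comp_norm_sq_ae_eq hg₁ hg₂ (ae_eq_of_real_convolution_ae_eq
    (integrable_ringGaussian √I) (dense_fourier_ringGaussian_ne_zero √I)
    (integrable_comp_norm_sq hg₁) (integrable_comp_norm_sq hg₂) ?_)
  filter_upwards [
    (integrable_ringGaussian √I).ae_convolution_exists (ContinuousLinearMap.lsmul ℝ ℝ)
      (integrable_comp_norm_sq hg₁),
    (integrable_ringGaussian √I).ae_convolution_exists (ContinuousLinearMap.lsmul ℝ ℝ)
      (integrable_comp_norm_sq hg₂)] with w hw₁ hw₂
  rw [convolution_ringGaussian_comp_norm_sq hI hw₁, convolution_ringGaussian_comp_norm_sq hI hw₂,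
    h _ (sq_nonneg ‖w‖)]

lemma eqOn_Ici_of_integral_K_smul_eq (hI : 0 ≤ I) {g₁ g₂ : ℝ → E}
    (hc₁ : ContinuousOn g₁ (Set.Ici 0)) (hg₁ : IntegrableOn g₁ (Set.Ici 0))
    (hc₂ : ContinuousOn g₂ (Set.Ici 0)) (hg₂ : IntegrableOn g₂ (Set.Ici 0))
    (h : ∀ y : ℝ, 0 ≤ y →
      ∫ x in Set.Ioi (0 : ℝ), K I x y • g₁ x = ∫ x in Set.Ioi (0 : ℝ), K I x y • g₂ x) :
    Set.EqOn g₁ g₂ (Set.Ici 0) := by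
  have hae := stmt_14_general hI (hg₁.mono_set Set.Ioi_subset_Ici_self)
    (hg₂.mono_set Set.Ioi_subset_Ici_self) h
  rw [Measure.restrict_congr_set Ioi_ae_eq_Ici] at hae
  exact Measure.eqOn_of_ae_eq hae hc₁ hc₂ (by simp)

end Transform

lemma K_symm (I x y : ℝ) : K I x y = K I y x := by
  simp only [K, mul_comm y x, add_comm y x]

theorem stmt_14 (I : ℝ) (hI : 0 ≤ I) :
    (∀ g : ℝ → ℝ, ContinuousOn g (Set.Ici 0) → IntegrableOn g (Set.Ici 0) →
      (∀ y : ℝ, 0 ≤ y → (∫ x in Set.Ioi (0:ℝ), K I x y * g x) = 0) →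
      ∀ x : ℝ, 0 ≤ x → g x = 0) ∧
    (∀ g₁ g₂ : ℝ → ℝ, ContinuousOn g₁ (Set.Ici 0) → IntegrableOn g₁ (Set.Ici 0) →
      ContinuousOn g₂ (Set.Ici 0) → IntegrableOn g₂ (Set.Ici 0) →
      (∀ x : ℝ, 0 ≤ x →
        (∫ y in Set.Ioi (0:ℝ), K I x y * g₁ y) = ∫ y in Set.Ioi (0:ℝ), K I x y * g₂ y) →
      ∀ y : ℝ, 0 ≤ y → g₁ y = g₂ y) := by
  refine ⟨fun g hc hg h => ?_, fun g₁ g₂ hc₁ hg₁ hc₂ hg₂ h => ?_⟩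
  · exact eqOn_Ici_of_integral_K_smul_eq hI hc hg continuousOn_const integrableOn_zero
      fun y hy => by simpa using h y hy
  · exact eqOn_Ici_of_integral_K_smul_eq hI hc₁ hg₁ hc₂ hg₂
      fun y hy => by simpa only [smul_eq_mul, K_symm I _ y] using h y hy
end

section
/- First elliptic-integral asymptotic: for every fixed x ≥ 0, lim_{𝖨 → ∞} √𝖨 · ( (1/(2π)) ∫₀^{2π} √( x + 𝖨 + 2·√(x𝖨)·cos θ ) dθ − √𝖨 ) = x/4. Equivalently, (1/(2π)) ∫₀^{2π} √( x + 𝖨 + 2·√(x𝖨)·cos θ ) dθ = √𝖨 + x/(4√𝖨) + O(1/𝖨) as 𝖨 → ∞. -/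
open Real Filter Topology

/-!
The integrand is `‖√I + √x e^{iθ}‖`, so the mean in question is the average of the norm over the
circle of radius `√x` about `√I`. Near `c ≠ 0`, with `u = z / c`,
`‖c + z‖ = ‖c‖ ‖1 + u‖ = ‖c‖ (1 + Re u + (Im u)² / 2 + O(‖u‖³))`.
As `(Im u)² = (‖u‖² - Re u²) / 2`, the quadratic polynomial is the constant `‖u‖² / 4` plus a
harmonic function vanishing at `0`; by the mean value property only the constant survives the
averaging.
-/

lemma abs_norm_one_add_sub_le {u : ℂ} (hu : ‖u‖ < 1) :
    |‖1 + u‖ - 1 - (u.re + u.im ^ 2 / 2)| ≤ ‖u‖ ^ 3 / (2 * (1 - ‖u‖)) := by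
  set r := ‖1 + u‖
  set a := 1 + u.re with ha
  have hre := abs_le.1 (Complex.abs_re_le_norm u)
  have hr_lower : 1 - ‖u‖ ≤ r := by simpa using norm_sub_le_norm_add (1 : ℂ) u
  have hr_upper : r ≤ 1 + ‖u‖ := by simpa using norm_add_le (1 : ℂ) u
  have hfactor : (r - a) * (r + a) = u.im ^ 2 := by
    have hr_sq : r ^ 2 = a ^ 2 + u.im ^ 2 := by
      rw [Complex.sq_norm, Complex.normSq_apply]
      simp [a, sq]
    linear_combination hr_sq
  have hdiff_nonneg : 0 ≤ r - a :=
    nonneg_of_mul_nonneg_left (hfactor ▸ sq_nonneg u.im) (by linarith)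
  have hdiff_le : r - a ≤ ‖u‖ ^ 2 / (2 * (1 - ‖u‖)) := by
    rw [le_div_iff₀ (by linarith)]
    calc (r - a) * (2 * (1 - ‖u‖)) ≤ (r - a) * (r + a) := by gcongr; linarith
      _ = u.im ^ 2 := hfactor
      _ ≤ ‖u‖ ^ 2 := sq_le_sq.2 (by simpa using Complex.abs_im_le_norm u)
  have hsum : |1 - (r + a) / 2| ≤ ‖u‖ := abs_le.2 ⟨by linarith, by linarith⟩
  calc |r - 1 - (u.re + u.im ^ 2 / 2)| = |(r - a) * (1 - (r + a) / 2)| := by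
        congr 1
        linear_combination ha + hfactor / 2
    _ = (r - a) * |1 - (r + a) / 2| := by rw [abs_mul, abs_of_nonneg hdiff_nonneg]
    _ ≤ ‖u‖ ^ 2 / (2 * (1 - ‖u‖)) * ‖u‖ := by gcongr
    _ = ‖u‖ ^ 3 / (2 * (1 - ‖u‖)) := by ring

lemma abs_norm_add_sub_le {c z : ℂ} (h : ‖z‖ < ‖c‖) :
    |‖z + c‖ - ‖c‖ - ‖c‖ * ((z / c).re + (z / c).im ^ 2 / 2)|
      ≤ ‖z‖ ^ 3 / (2 * ‖c‖ * (‖c‖ - ‖z‖)) := by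
  have hc : 0 < ‖c‖ := (norm_nonneg z).trans_lt h
  have hsub : 0 < ‖c‖ - ‖z‖ := sub_pos.2 h
  have hnorm : ‖z + c‖ = ‖c‖ * ‖1 + z / c‖ := by
    rw [← norm_mul, mul_add, mul_div_cancel₀ z (norm_pos_iff.1 hc), mul_one, add_comm]
  calc |‖z + c‖ - ‖c‖ - ‖c‖ * ((z / c).re + (z / c).im ^ 2 / 2)|
      = |‖c‖ * (‖1 + z / c‖ - 1 - ((z / c).re + (z / c).im ^ 2 / 2))| := by
        rw [hnorm]
        ring_nf
    _ = ‖c‖ * |‖1 + z / c‖ - 1 - ((z / c).re + (z / c).im ^ 2 / 2)| := by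
        rw [abs_mul, abs_norm]
    _ ≤ ‖c‖ * (‖z / c‖ ^ 3 / (2 * (1 - ‖z / c‖))) := by
        gcongr
        exact abs_norm_one_add_sub_le (by rwa [norm_div, div_lt_one hc])
    _ = ‖z‖ ^ 3 / (2 * ‖c‖ * (‖c‖ - ‖z‖)) := by
        rw [norm_div]
        field_simp

lemma re_add_im_sq_div_two (u : ℂ) :
    u.re + u.im ^ 2 / 2 = ‖u‖ ^ 2 / 4 + (u - u ^ 2 / 4).re := by
  have hsq_re : (u ^ 2 / 4).re = (u.re ^ 2 - u.im ^ 2) / 4 := by simp [sq]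
  rw [Complex.sub_re, hsq_re, Complex.sq_norm, Complex.normSq_apply]
  ring

lemma circleAverage_re_add_im_sq_div_two (c : ℂ) (R : ℝ) :
    circleAverage (fun z ↦ (z / c).re + (z / c).im ^ 2 / 2) 0 R = R ^ 2 / (4 * ‖c‖ ^ 2) := by
  have hharmonic : circleAverage (fun z ↦ (z / c - (z / c) ^ 2 / 4).re) 0 R = 0 := by
    rw [InnerProductSpace.HarmonicOnNhd.circleAverage_eq fun z _ ↦
      AnalyticAt.harmonicAt_re (f := fun z ↦ z / c - (z / c) ^ 2 / 4) (by fun_prop)]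
    simp
  have hconst : circleAverage (fun z ↦ ‖z / c‖ ^ 2 / 4) 0 R = R ^ 2 / (4 * ‖c‖ ^ 2) := by
    refine circleAverage_const_on_circle fun z hz ↦ ?_
    rw [norm_div, mem_sphere_zero_iff_norm.1 hz, div_pow, sq_abs]
    ring
  simp only [re_add_im_sq_div_two]
  rw [circleAverage_fun_add, hharmonic, hconst, add_zero] <;>
    exact ContinuousOn.circleIntegrable' (by fun_prop)

lemma abs_circleAverage_le_of_abs_le {f : ℂ → ℝ} {c : ℂ} {R B : ℝ} (hf : CircleIntegrable f c R)
    (h : ∀ z ∈ Metric.sphere c |R|, |f z| ≤ B) : |circleAverage f c R| ≤ B :=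
  abs_circleAverage_le_circleAverage_abs.trans (circleAverage_mono_on_of_le_circle hf.abs h)

lemma abs_circleAverage_norm_sub_le {c : ℂ} {R : ℝ} (h : |R| < ‖c‖) :
    |circleAverage (‖·‖) c R - ‖c‖ - R ^ 2 / (4 * ‖c‖)|
      ≤ |R| ^ 3 / (2 * ‖c‖ * (‖c‖ - |R|)) := by
  have hc : ‖c‖ ≠ 0 := ((abs_nonneg R).trans_lt h).ne'
  have hintegrable (f : ℂ → ℝ) (hf : Continuous f) : CircleIntegrable f 0 R :=
    hf.continuousOn.circleIntegrable'
  have haverage : circleAverage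
      (fun z ↦ ‖z + c‖ - ‖c‖ - ‖c‖ * ((z / c).re + (z / c).im ^ 2 / 2)) 0 R
      = circleAverage (‖·‖) c R - ‖c‖ - R ^ 2 / (4 * ‖c‖) := by
    rw [circleAverage_fun_sub (hintegrable _ (by fun_prop)) (hintegrable _ (by fun_prop)),
      circleAverage_fun_sub (hintegrable _ (by fun_prop)) (hintegrable _ (by fun_prop)),
      circleAverage_map_add_const (f := (‖·‖)), circleAverage_const]
    simp only [← smul_eq_mul (‖c‖)]
    rw [circleAverage_fun_smul, circleAverage_re_add_im_sq_div_two, smul_eq_mul]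
    field_simp
  rw [← haverage]
  refine abs_circleAverage_le_of_abs_le (hintegrable _ (by fun_prop)) fun z hz ↦ ?_
  rw [mem_sphere_zero_iff_norm] at hz
  rw [← hz] at h ⊢
  exact abs_norm_add_sub_le h

lemma tendsto_norm_mul_circleAverage_norm_sub (R : ℝ) :
    Tendsto (fun c : ℂ ↦ ‖c‖ * (circleAverage (‖·‖) c R - ‖c‖)) (Bornology.cobounded ℂ)
      (𝓝 (R ^ 2 / 4)) := by
  have hnorm : Tendsto (fun c : ℂ ↦ ‖c‖) (Bornology.cobounded ℂ) atTop :=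
    tendsto_norm_cobounded_atTop
  have hbound : Tendsto (fun c : ℂ ↦ |R| ^ 3 / (2 * (‖c‖ - |R|))) (Bornology.cobounded ℂ) (𝓝 0) :=
    ((tendsto_atTop_add_const_right _ (-|R|) hnorm).const_mul_atTop two_pos).const_div_atTop _
  rw [tendsto_iff_norm_sub_tendsto_zero]
  refine squeeze_zero' (.of_forall fun _ ↦ norm_nonneg _) ?_ hbound
  filter_upwards [hnorm.eventually_gt_atTop |R|] with c hc
  have hc_pos : 0 < ‖c‖ := (abs_nonneg R).trans_lt hc
  calc |‖c‖ * (circleAverage (‖·‖) c R - ‖c‖) - R ^ 2 / 4|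
      = |‖c‖ * (circleAverage (‖·‖) c R - ‖c‖ - R ^ 2 / (4 * ‖c‖))| := by
        congr 1
        field_simp
    _ = ‖c‖ * |circleAverage (‖·‖) c R - ‖c‖ - R ^ 2 / (4 * ‖c‖)| := by
        rw [abs_mul, abs_norm]
    _ ≤ ‖c‖ * (|R| ^ 3 / (2 * ‖c‖ * (‖c‖ - |R|))) := by
        gcongr
        exact abs_circleAverage_norm_sub_le hc
    _ = |R| ^ 3 / (2 * (‖c‖ - |R|)) := by field_simp

lemma norm_circleMap_ofReal (t s θ : ℝ) :
    ‖circleMap t s θ‖ = √(s ^ 2 + t ^ 2 + 2 * (s * t) * cos θ) := by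
  rw [Complex.norm_def, Complex.normSq_apply]
  simp only [circleMap, Complex.add_re, Complex.add_im, Complex.ofReal_re, Complex.ofReal_im,
    Complex.re_ofReal_mul, Complex.im_ofReal_mul, Complex.exp_ofReal_mul_I_re,
    Complex.exp_ofReal_mul_I_im]
  congr 1
  linear_combination s ^ 2 * sin_sq_add_cos_sq θ

lemma circleAverage_norm_sqrt {x y : ℝ} (hx : 0 ≤ x) (hy : 0 ≤ y) :
    circleAverage (‖·‖) (√y : ℂ) √x
      = 1 / (2 * π) * ∫ θ in (0 : ℝ)..(2 * π), √(x + y + 2 * √(x * y) * cos θ) := by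
  simp only [circleAverage_def, norm_circleMap_ofReal, sq_sqrt hx, sq_sqrt hy, sqrt_mul hx,
    smul_eq_mul, one_div]

theorem stmt_17 (x : ℝ) (hx : 0 ≤ x) :
    Tendsto (fun I : ℝ =>
        Real.sqrt I * ((1 / (2 * π)) * (∫ θ in (0:ℝ)..(2 * π),
          Real.sqrt (x + I + 2 * Real.sqrt (x * I) * Real.cos θ)) - Real.sqrt I))
      atTop (𝓝 (x / 4)) := by
  have hcenter : Tendsto (fun I : ℝ ↦ (√I : ℂ)) atTop (Bornology.cobounded ℂ) :=
    (RCLike.tendsto_ofReal_atTop_cobounded ℂ).comp tendsto_sqrt_atTop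
  have hlim := (tendsto_norm_mul_circleAverage_norm_sub √x).comp hcenter
  rw [sq_sqrt hx] at hlim
  refine hlim.congr' ?_
  filter_upwards [eventually_ge_atTop 0] with I hI
  simp only [Function.comp_apply, Complex.norm_of_nonneg (sqrt_nonneg I),
    circleAverage_norm_sqrt hx hI]
end

section
/- Logarithmic moment asymptotic: let F be a probability measure on [0,∞) with finite mean ∫₀^∞ x dF(x) < ∞. Then lim_{𝖨 → ∞} [ ∫₀^∞ (1/(2π)) ∫₀^{2π} ln( x + 𝖨 + 2·√(x𝖨)·cos θ ) dθ dF(x) − ln 𝖨 ] = 0. -/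
/-!
For `x ≥ 0` and `I > 0` the logarithm is `2 log |√I e^{iθ} + √x|`, so Jensen's formula for the
linear function `z ↦ z + √x` on the circle of radius `√I` evaluates the angular average as
`log I + log⁺ (x / I)`. What has to tend to `0` is therefore `∫ log⁺ (x / I) dF(x)`, whose integrand
vanishes for `I ≥ x` and is at most `log⁺ x` for `I ≥ 1`, so that dominated convergence applies.
-/

open MeasureTheory Real Filter Topology

lemma norm_circleMap_zero_add_ofReal_sq (a r θ : ℝ) :
    ‖circleMap 0 r θ + a‖ ^ 2 = a ^ 2 + r ^ 2 + 2 * (a * r) * cos θ := by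
  have hre : (circleMap 0 r θ + a).re = r * cos θ + a := by simp [circleMap]
  have him : (circleMap 0 r θ + a).im = r * sin θ := by simp [circleMap]
  rw [Complex.sq_norm, Complex.normSq_apply, hre, him]
  linear_combination r ^ 2 * sin_sq_add_cos_sq θ

lemma average_log_sq_add_sq_add_two_mul_cos (a : ℝ) {r : ℝ} (hr : r ≠ 0) :
    (1 / (2 * π)) * ∫ θ in (0 : ℝ)..(2 * π), log (a ^ 2 + r ^ 2 + 2 * (a * r) * cos θ)
      = log (r ^ 2) + log⁺ (a ^ 2 / r ^ 2) := by
  have jensen : circleAverage (fun z ↦ log ‖z + a‖) 0 r = log r + log⁺ (a / r) := by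
    have h := circleAverage_log_norm_sub_const_eq_log_radius_add_posLog (a := -(a : ℂ)) (c := 0) hr
    simp only [sub_neg_eq_add, zero_add, Complex.norm_real, norm_eq_abs] at h
    rw [h, ← posLog_abs (r⁻¹ * |a|), abs_mul, abs_abs, ← abs_mul, posLog_abs, inv_mul_eq_div]
  calc
    _ = 2 * circleAverage (fun z ↦ log ‖z + a‖) 0 r := by
      simp only [circleAverage_def, smul_eq_mul, ← norm_circleMap_zero_add_ofReal_sq, log_pow,
        intervalIntegral.integral_const_mul]
      push_cast
      ring
    _ = log (r ^ 2) + log⁺ (a ^ 2 / r ^ 2) := by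
      rw [jensen, ← div_pow, log_pow, posLog_pow]
      push_cast
      ring

lemma average_log_add_add_two_mul_sqrt_mul_cos {x y : ℝ} (hx : 0 ≤ x) (hy : 0 < y) :
    (1 / (2 * π)) * ∫ θ in (0 : ℝ)..(2 * π), log (x + y + 2 * √(x * y) * cos θ)
      = log y + log⁺ (x / y) := by
  simpa only [sq_sqrt hx, sq_sqrt hy.le, ← sqrt_mul hx]
    using average_log_sq_add_sq_add_two_mul_cos √x (sqrt_pos.2 hy).ne'

lemma posLog_le_abs (x : ℝ) : log⁺ x ≤ |x| := by
  rw [← posLog_abs]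
  exact max_le (abs_nonneg x) (log_le_self (abs_nonneg x))

lemma posLog_div_le_posLog (x : ℝ) {t : ℝ} (ht : 1 ≤ t) : log⁺ (x / t) ≤ log⁺ x := by
  rw [← posLog_abs (x / t), ← posLog_abs x, abs_div, abs_of_pos (zero_lt_one.trans_le ht)]
  exact posLog_le_posLog (by positivity) (div_le_self (abs_nonneg x) ht)

section Integral

variable {α : Type*} [MeasurableSpace α] {μ : Measure α} {f : α → ℝ}

lemma integrable_posLog (hf : Integrable f μ) : Integrable (fun x ↦ log⁺ (f x)) μ :=
  hf.mono (continuous_posLog.comp_aestronglyMeasurable hf.1) <| .of_forall fun x ↦ by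
    simpa only [norm_of_nonneg posLog_nonneg, norm_eq_abs] using posLog_le_abs (f x)

lemma integrable_posLog_div (hf : AEMeasurable f μ)
    (hlog : Integrable (fun x ↦ log⁺ (f x)) μ) {t : ℝ} (ht : 1 ≤ t) :
    Integrable (fun x ↦ log⁺ (f x / t)) μ :=
  hlog.mono' (continuous_posLog.comp_aestronglyMeasurable (hf.div_const t).aestronglyMeasurable) <|
    .of_forall fun x ↦ by
      simpa only [norm_of_nonneg posLog_nonneg] using posLog_div_le_posLog (f x) ht

lemma tendsto_integral_posLog_div_atTop (hf : AEMeasurable f μ)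
    (hlog : Integrable (fun x ↦ log⁺ (f x)) μ) :
    Tendsto (fun t : ℝ ↦ ∫ x, log⁺ (f x / t) ∂μ) atTop (𝓝 0) := by
  have pointwise (x : α) : Tendsto (fun t : ℝ ↦ log⁺ (f x / t)) atTop (𝓝 0) := by
    simpa only [posLog_zero, Function.comp_def, id] using
      (continuous_posLog.tendsto 0).comp (tendsto_const_nhds.div_atTop tendsto_id)
  have measurable : ∀ᶠ t : ℝ in atTop, AEStronglyMeasurable (fun x ↦ log⁺ (f x / t)) μ :=
    (eventually_ge_atTop 1).mono fun t ht ↦ (integrable_posLog_div hf hlog ht).1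
  have dominated : ∀ᶠ t : ℝ in atTop, ∀ᵐ x ∂μ, ‖log⁺ (f x / t)‖ ≤ log⁺ (f x) := by
    filter_upwards [eventually_ge_atTop 1] with t ht
    refine .of_forall fun x ↦ ?_
    simpa only [norm_of_nonneg posLog_nonneg] using posLog_div_le_posLog (f x) ht
  simpa only [integral_zero] using tendsto_integral_filter_of_dominated_convergence _
    measurable dominated hlog (.of_forall pointwise)

end Integral

theorem stmt_19_general (F : Measure ℝ) [IsProbabilityMeasure F] (hsupp : F (Set.Iio 0) = 0)
    (hlog : Integrable (fun x : ℝ ↦ log⁺ x) F) :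
    Tendsto (fun I : ℝ ↦
        (∫ x, ((1 / (2 * π)) * ∫ θ in (0 : ℝ)..(2 * π),
          log (x + I + 2 * √(x * I) * cos θ)) ∂F) - log I)
      atTop (𝓝 0) := by
  have nonneg : ∀ᵐ x ∂F, 0 ≤ x := by
    simpa only [ae_iff, not_le, Set.Iio_def] using hsupp
  refine (tendsto_integral_posLog_div_atTop aemeasurable_id' hlog).congr' ?_
  filter_upwards [eventually_ge_atTop 1] with I hI
  have average : ∀ᵐ x ∂F, (1 / (2 * π)) * ∫ θ in (0 : ℝ)..(2 * π),
      log (x + I + 2 * √(x * I) * cos θ) = log I + log⁺ (x / I) :=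
    nonneg.mono fun x hx ↦
      average_log_add_add_two_mul_sqrt_mul_cos hx (zero_lt_one.trans_le hI)
  rw [integral_congr_ae average, integral_add (integrable_const _)
    (integrable_posLog_div aemeasurable_id' hlog hI), integral_const, probReal_univ,
    one_smul, add_sub_cancel_left]

theorem stmt_19 (F : Measure ℝ) [IsProbabilityMeasure F] (hsupp : F (Set.Iio 0) = 0)
    (hmean : Integrable (fun x : ℝ => x) F) :
    Tendsto (fun I : ℝ =>
        (∫ x, ((1 / (2 * π)) * ∫ θ in (0:ℝ)..(2 * π),
          Real.log (x + I + 2 * Real.sqrt (x * I) * Real.cos θ)) ∂F) - Real.log I)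
      atTop (𝓝 0) :=
  stmt_19_general F hsupp (integrable_posLog hmean)
end
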